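/- For every even integer m ≥ 2, one has 2·( binomial(2m+3, m+1) + 1 − (m+2)² ) − 2^{m/2} > (2m − 1)·2^m. -/

import Mathlib

/-!
Pascal's rule, applied twice, shows that `C(2m+3, m+1)` more than triples at each step, while
`m * 2 ^ m + (m + 2) ^ 2` grows by a factor less than three; hence
`C(2m+3, m+1) + 1 - (m+2)²` is at least `m * 2 ^ m`. Doubling this bound leaves a surplus of
`2 ^ m` over `(2m - 1) * 2 ^ m`, which absorbs any smaller power of two.
-/

theorem choose_two_mul_add_five (m : ℕ) :
    (2 * m + 5).choose (m + 2) = 3 * (2 * m + 3).choose (m + 1) + (2 * m + 3).choose m := by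
  have symm : (2 * m + 3).choose (m + 2) = (2 * m + 3).choose (m + 1) :=
    Nat.choose_symm_half (m + 1)
  calc (2 * m + 5).choose (m + 2)
      = (2 * m + 4).choose (m + 1) + (2 * m + 4).choose (m + 2) := Nat.choose_succ_succ' _ _
    _ = ((2 * m + 3).choose m + (2 * m + 3).choose (m + 1)) +
          ((2 * m + 3).choose (m + 1) + (2 * m + 3).choose (m + 2)) :=
        congrArg₂ (· + ·) (Nat.choose_succ_succ' _ _) (Nat.choose_succ_succ' _ _)
    _ = 3 * (2 * m + 3).choose (m + 1) + (2 * m + 3).choose m := by rw [symm]; ring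

theorem three_mul_choose_two_mul_add_three_lt (m : ℕ) :
    3 * (2 * m + 3).choose (m + 1) < (2 * m + 5).choose (m + 2) := by
  rw [choose_two_mul_add_five]
  exact Nat.lt_add_of_pos_right (Nat.choose_pos (by lia))

theorem two_mul_two_pow_le_mul_two_pow_add (m : ℕ) :
    2 * 2 ^ m ≤ m * 2 ^ m + 2 * (m + 1) := by
  match m with
  | 0 | 1 => decide
  | m + 2 => exact le_add_right (Nat.mul_le_mul_right _ (Nat.le_add_left 2 m))

theorem mul_two_pow_add_sq_succ_lt_three_mul (m : ℕ) :
    (m + 1) * 2 ^ (m + 1) + (m + 3) ^ 2 < 3 * (m * 2 ^ m + (m + 2) ^ 2) :=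
  calc (m + 1) * 2 ^ (m + 1) + (m + 3) ^ 2
      = 2 * (m * 2 ^ m) + 2 * 2 ^ m + (m + 3) ^ 2 := by ring
    _ ≤ 2 * (m * 2 ^ m) + (m * 2 ^ m + 2 * (m + 1)) + (m + 3) ^ 2 := by
      gcongr
      exact two_mul_two_pow_le_mul_two_pow_add m
    _ = 3 * (m * 2 ^ m) + (m ^ 2 + 8 * m + 11) := by ring
    _ < 3 * (m * 2 ^ m) + 3 * (m + 2) ^ 2 := by
      gcongr
      nlinarith
    _ = 3 * (m * 2 ^ m + (m + 2) ^ 2) := by ring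

theorem mul_two_pow_add_sq_le_choose_add_one (m : ℕ) :
    m * 2 ^ m + (m + 2) ^ 2 ≤ (2 * m + 3).choose (m + 1) + 1 := by
  induction m with
  | zero => decide
  | succ m ih =>
    refine Nat.le_of_lt_succ ?_
    calc (m + 1) * 2 ^ (m + 1) + (m + 3) ^ 2
        < 3 * (m * 2 ^ m + (m + 2) ^ 2) := mul_two_pow_add_sq_succ_lt_three_mul m
      _ ≤ 3 * ((2 * m + 3).choose (m + 1) + 1) := by gcongr
      _ = 3 * (2 * m + 3).choose (m + 1) + 1 + 2 := by ring
      _ ≤ (2 * m + 5).choose (m + 2) + 2 := by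
        gcongr
        exact three_mul_choose_two_mul_add_three_lt m

theorem calabi_yau_beats_torus_general {k m : ℕ} (hk : k < m) :
    2 * (((2 * m + 3).choose (m + 1) : ℤ) + 1 - ((m : ℤ) + 2) ^ 2) - 2 ^ k >
      (2 * (m : ℤ) - 1) * 2 ^ m := by
  have choose_bound : (m : ℤ) * 2 ^ m + ((m : ℤ) + 2) ^ 2 ≤ (2 * m + 3).choose (m + 1) + 1 :=
    mod_cast mul_two_pow_add_sq_le_choose_add_one m
  have pow_bound : (2 : ℤ) ^ k < 2 ^ m := pow_lt_pow_right₀ one_lt_two hk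
  linarith

/-- For every even `m ≥ 2`, `2(binom(2m+3, m+1) + 1 − (m+2)²) − 2^{m/2} > (2m−1)·2^m`:
the Calabi-Yau hypersurfaces carry more linearly independent Rarita-Schwinger fields
than flat tori of the same real dimension `2m`. -/
theorem calabi_yau_beats_torus (m : ℕ) (hm : Even m) (hm2 : 2 ≤ m) :
    2 * (((2 * m + 3).choose (m + 1) : ℤ) + 1 - ((m : ℤ) + 2) ^ 2) - 2 ^ (m / 2) >
      (2 * (m : ℤ) - 1) * 2 ^ m :=
  calabi_yau_beats_torus_general (Nat.div_lt_self (two_pos.trans_le hm2) one_lt_two)
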